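/- Let 1/2 < s < 1. Then (2^{2s} − 2)/(2s) > 0 and B(s + 1/2, 1 − s) − 2^{2s} > 0, where B denotes the Euler Beta function. -/

import Mathlib

open intervalIntegral

theorem real_beta_aux (a b : ℝ) (ha : 0 < a) (hb : 0 < b) :
    (∫ t in (0:ℝ)..1, t ^ (a - 1) * (1 - t) ^ (b - 1)) =
      Real.Gamma a * Real.Gamma b / Real.Gamma (a + b) := by
  have h := Complex.betaIntegral_eq_Gamma_mul_div (a : ℂ) (b : ℂ) (by simpa) (by simpa)
  rw [← Complex.ofReal_inj]
  push_cast
  rw [← Complex.Gamma_ofReal, ← Complex.Gamma_ofReal, ← Complex.Gamma_ofReal, Complex.ofReal_add,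
    ← h, Complex.betaIntegral, ← intervalIntegral.integral_ofReal]
  apply intervalIntegral.integral_congr
  intro t ht
  rw [Set.uIcc_of_le zero_le_one] at ht
  have h1 : 0 ≤ 1 - t := by linarith [ht.2]
  simp only [Complex.ofReal_mul]
  rw [Complex.ofReal_cpow ht.1, Complex.ofReal_cpow h1]
  push_cast
  rfl

theorem stmt14 (s : ℝ) (hs : 1/2 < s) (hs1 : s < 1) :
    (2 ^ (2 * s) - 2) / (2 * s) > 0 ∧
      (∫ t in (0:ℝ)..1, t ^ (s + 1/2 - 1) * (1 - t) ^ ((1 - s) - 1)) - 2 ^ (2 * s) > 0 := by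
  constructor
  · have : (2:ℝ) ^ (1:ℝ) < 2 ^ (2 * s) :=
      Real.rpow_lt_rpow_of_exponent_lt (by norm_num) (by linarith)
    rw [Real.rpow_one] at this
    apply div_pos <;> linarith
  · rw [real_beta_aux (s + 1/2) (1 - s) (by linarith) (by linarith)]
    have hG : Real.Gamma (s + 1/2 + (1 - s)) = √Real.pi / 2 := by
      rw [show s + 1/2 + (1 - s) = 1/2 + 1 by ring, Real.Gamma_add_one (by norm_num),
        Real.Gamma_one_half_eq]
      ring
    have hdup := Real.Gamma_mul_Gamma_add_half (1 - s)
    rw [show 1 - 2 * (1 - s) = 2 * s - 1 by ring, Real.rpow_sub_one (by norm_num)] at hdup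
    have hA : 0 < Real.Gamma (s + 1/2) := Real.Gamma_pos_of_pos (by linarith)
    have hY : 0 < Real.Gamma (1 - s + 1/2) := Real.Gamma_pos_of_pos (by linarith)
    have hZ : 0 < Real.Gamma (2 * (1 - s)) := Real.Gamma_pos_of_pos (by linarith)
    have hconv : Real.Gamma (1 - s + 1/2) ^ 2 ≤ Real.Gamma (2 * (1 - s)) := by
      have h := Real.Gamma_mul_add_mul_le_rpow_Gamma_mul_rpow_Gamma (s := 2 * (1 - s)) (t := 1)
        (a := 1/2) (b := 1/2) (by linarith) one_pos (by norm_num) (by norm_num) (by norm_num)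
      rw [Real.Gamma_one, Real.one_rpow, mul_one, mul_one, ← Real.sqrt_eq_rpow,
        show 1/2 * (2 * (1 - s)) + 1/2 = 1 - s + 1/2 by ring] at h
      exact (Real.le_sqrt' hY).1 h
    have hrefl : 1 < Real.Gamma (s + 1/2) * Real.Gamma (1 - s + 1/2) := by
      have h := Real.Gamma_mul_Gamma_one_sub (s - 1/2)
      have hx : 0 < Real.pi * (s - 1/2) := mul_pos Real.pi_pos (by linarith)
      have hsin : 0 < Real.sin (Real.pi * (s - 1/2)) :=
        Real.sin_pos_of_pos_of_lt_pi hx (by nlinarith [Real.pi_pos])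
      rw [show s + 1/2 = (s - 1/2) + 1 by ring, Real.Gamma_add_one (by linarith),
        show 1 - s + 1/2 = 1 - (s - 1/2) by ring, mul_assoc, h, ← mul_div_assoc, lt_div_iff₀ hsin]
      linarith [Real.sin_lt hx]
    have hp : 0 < √Real.pi := Real.sqrt_pos.2 Real.pi_pos
    have hP : (0:ℝ) < 2 ^ (2 * s) := by positivity
    rw [hG, gt_iff_lt, sub_pos, lt_div_iff₀ (by positivity)]
    generalize Real.Gamma (s + 1/2) = A at *
    generalize Real.Gamma (1 - s + 1/2) = Y at *
    generalize Real.Gamma (1 - s) = X at *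
    generalize Real.Gamma (2 * (1 - s)) = Z at *
    generalize (2:ℝ) ^ (2 * s) = P at *
    generalize √Real.pi = r at *
    refine lt_of_mul_lt_mul_right ?_ hY.le
    have h1 : Y < A * Z := by nlinarith
    have h2 : A * X * Y = A * Z * (P * r / 2) := by rw [mul_assoc, hdup]; ring
    rw [h2]
    have h3 : 0 < P * r / 2 := by positivity
    nlinarith
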